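/- Let Γ = (V,E) be a simple finite connected graph, q : V → ℝ a potential, and H(Γ) = Q − C the discrete Schrödinger operator, where Q = diag(q) and C is the adjacency matrix of Γ. Let β = |E| − |V| + 1, fix a spanning tree of Γ, and let S = {e_1, …, e_β} be the edges not in the tree, with e_j = (u_j, v_j), u_j < v_j. For α = (α_1,…,α_β) ∈ ℝ^β let H(Γ^α_mag) be the Hermitian matrix with diagonal entries q_u, entries −1 at positions (u,v),(v,u) for edges (u,v) ∈ E∖S, entries −e^{iα_j} at (u_j,v_j) and −e^{−iα_j} at (v_j,u_j) for e_j ∈ S, and 0 elsewhere. Suppose λ_n(H(Γ)) (the n-th smallest eigenvalue) is simple and its eigenvector f is nonzero at every vertex; let φ be the number of edges (u,v) ∈ E with f_u f_v < 0. Then the function α ↦ λ_n(H(Γ^α_mag)) has a local minimum at α = 0 if and only if φ = n − 1. -/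

import Mathlib

open Matrix

/-- The eigenvalues of a Hermitian matrix, sorted in increasing order and counted with
multiplicity (junk value `0` if the matrix is not Hermitian); `sE M i` is the `i`-th sorted
eigenvalue, 0-based, with junk value `0` out of range. -/
noncomputable def sortedEigs {𝕜 : Type*} [RCLike 𝕜] {d : ℕ} (M : Matrix (Fin d) (Fin d) 𝕜) :
    Fin d → ℝ :=
  if h : M.IsHermitian then h.eigenvalues ∘ Tuple.sort h.eigenvalues else 0

noncomputable def sE {𝕜 : Type*} [RCLike 𝕜] {d : ℕ} (M : Matrix (Fin d) (Fin d) 𝕜)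
    (i : ℕ) : ℝ :=
  if h : i < d then sortedEigs M ⟨i, h⟩ else 0

/-- The discrete Schrödinger operator `H(Γ) = Q - C` of a graph `G` with potential `q`. -/
noncomputable def schrodOp {N : ℕ} (G : SimpleGraph (Fin N)) [DecidableRel G.Adj]
    (q : Fin N → ℝ) : Matrix (Fin N) (Fin N) ℝ :=
  Matrix.diagonal q - G.adjMatrix ℝ

/-- The cut operator `H(Γ^cut_γ)`: for each `j`, the matrix entries at `(uE j, vE j)` and
`(vE j, uE j)` (equal to `-1` in `H(Γ)`) are replaced by `0` and the diagonal entries at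
`uE j`, `vE j` are decreased by `γ j` and `(γ j)⁻¹` respectively. -/
noncomputable def schrodCut {N β : ℕ} (G : SimpleGraph (Fin N)) [DecidableRel G.Adj]
    (q : Fin N → ℝ) (uE vE : Fin β → Fin N) (γ : Fin β → ℝ) :
    Matrix (Fin N) (Fin N) ℝ :=
  schrodOp G q - ∑ j : Fin β, Matrix.of (fun a b =>
    if a = uE j ∧ b = uE j then γ j
    else if a = vE j ∧ b = vE j then (γ j)⁻¹
    else if (a = uE j ∧ b = vE j) ∨ (a = vE j ∧ b = uE j) then -1
    else 0)

/-- The magnetic operator `H(Γ^α_mag)`: the entries of `H(Γ)` at `(uE j, vE j)` and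
`(vE j, uE j)` (equal to `-1`) are replaced by `-exp(i α j)` and `-exp(-i α j)`. -/
noncomputable def schrodMag {N β : ℕ} (G : SimpleGraph (Fin N)) [DecidableRel G.Adj]
    (q : Fin N → ℝ) (uE vE : Fin β → Fin N) (α : Fin β → ℝ) :
    Matrix (Fin N) (Fin N) ℂ :=
  (schrodOp G q).map (fun x => (x : ℂ)) + ∑ j : Fin β, Matrix.of (fun a b =>
    if a = uE j ∧ b = vE j then 1 - Complex.exp (Complex.I * (α j : ℝ))
    else if a = vE j ∧ b = uE j then 1 - Complex.exp (-(Complex.I * (α j : ℝ)))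
    else 0)

/-- The number of sign changes ("zeros") of a vertex function `f`: the number of edges of `G`
at whose endpoints `f` has different signs. -/
noncomputable def signChanges {N : ℕ} (G : SimpleGraph (Fin N)) (f : Fin N → ℝ) : ℕ :=
  {e : Sym2 (Fin N) | e ∈ G.edgeSet ∧ ∀ u v : Fin N, e = s(u, v) → f u * f v < 0}.ncard

/-!
A magnetic operator is the operator `H_σ` twisted by a `U(1)`-connection `σ`. For the eigenfunction
`f` with eigenvalue `l`, the ground state transform gives
`2 (⟨f g, H_σ (f g)⟩ - l ‖f g‖²) = ∑ f u f v |g u - σ u v g v|²`, the sum over ordered pairs of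
adjacent vertices, whose negative terms come exactly from the `φ` sign-change edges.

Killing those terms costs `φ` linear conditions, so the eigenvalue of 0-based index `m` satisfies
`l ≤ λ_m(H_σ)` for all `σ` as soon as `φ ≤ m`; for `σ = 1` this also yields `φ ≥ m` when `l` is the
simple eigenvalue of index `m`.

If `φ > m`, some nonzero real 1-form `ω` supported on the sign-change edges is orthogonal, for the
weights `f u f v`, to the differentials of the `m` lower eigenfunctions divided by `f`. Along
`σ = exp (i t ω)` the test function `i / t` has twisted differential `ω + O(t)`, so for small
`t ≠ 0` it spans together with those `m` quotients an `(m + 1)`-dimensional space on which the form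
is negative, whence `λ_m(H_σ) < l`. On the complementary forest `ω` can be gauged away, which turns
`σ` into a magnetic potential supported on the edges `e_j`.
-/

open scoped Topology

section Variational

variable {𝕜 : Type*} [RCLike 𝕜] {d : ℕ} {M : Matrix (Fin d) (Fin d) 𝕜}

/-- The quadratic form `x ↦ ⟨x, M x⟩` of a Hermitian matrix. The form of such a matrix is real, so
that taking the real part loses nothing. -/
noncomputable def qform {V : Type*} [Fintype V] (M : Matrix V V 𝕜) (x : V → 𝕜) : ℝ :=
  RCLike.re (star x ⬝ᵥ M *ᵥ x)

/-- An orthonormal eigenbasis of a Hermitian matrix, ordered by increasing eigenvalue like `sE`. -/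
noncomputable def sortedEigenbasis (hM : M.IsHermitian) :
    OrthonormalBasis (Fin d) 𝕜 (EuclideanSpace 𝕜 (Fin d)) :=
  hM.eigenvectorBasis.reindex (Tuple.sort hM.eigenvalues).symm

theorem sE_eq_eigenvalues_sort (hM : M.IsHermitian) (k : Fin d) :
    sE M k = hM.eigenvalues (Tuple.sort hM.eigenvalues k) := by
  simp [sE, sortedEigs, hM]

theorem sE_le_sE (hM : M.IsHermitian) {k l : ℕ} (hkl : k ≤ l) (hl : l < d) :
    sE M k ≤ sE M l := by
  rw [sE_eq_eigenvalues_sort hM ⟨k, hkl.trans_lt hl⟩, sE_eq_eigenvalues_sort hM ⟨l, hl⟩]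
  exact Tuple.monotone_sort hM.eigenvalues hkl

theorem mulVec_sortedEigenbasis (hM : M.IsHermitian) (k : Fin d) :
    M *ᵥ (sortedEigenbasis hM k).ofLp = sE M k • (sortedEigenbasis hM k).ofLp := by
  simp only [sortedEigenbasis, OrthonormalBasis.reindex_apply, Equiv.symm_symm,
    hM.mulVec_eigenvectorBasis, sE_eq_eigenvalues_sort hM]

theorem sum_norm_sq_eq_sum_norm_repr_sq (b : OrthonormalBasis (Fin d) 𝕜 (EuclideanSpace 𝕜 (Fin d)))
    (x : Fin d → 𝕜) : ∑ u, ‖x u‖ ^ 2 = ∑ k, ‖b.repr (WithLp.toLp 2 x) k‖ ^ 2 := by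
  rw [← EuclideanSpace.norm_sq_eq (b.repr _), b.repr.norm_map, EuclideanSpace.norm_sq_eq]

theorem qform_eq_sum_sE_mul (hM : M.IsHermitian) (x : Fin d → 𝕜) :
    qform M x = ∑ k : Fin d, sE M k * ‖(sortedEigenbasis hM).repr (WithLp.toLp 2 x) k‖ ^ 2 := by
  set b := sortedEigenbasis hM
  set y := b.repr (WithLp.toLp 2 x) with hy
  have hMx : M *ᵥ x = ∑ k : Fin d, (y k * (sE M k : 𝕜)) • (b k).ofLp := by
    have hx : x = ∑ k, y k • (b k).ofLp := by
      simpa using congrArg WithLp.ofLp (b.sum_repr (WithLp.toLp 2 x)).symm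
    conv_lhs => rw [hx]
    simp only [Matrix.mulVec_sum, Matrix.mulVec_smul, b, mulVec_sortedEigenbasis hM, mul_smul,
      RCLike.real_smul_eq_coe_smul (K := 𝕜)]
  have hb (k : Fin d) : star x ⬝ᵥ (b k).ofLp = star (y k) := by
    rw [hy, b.repr_apply_apply, EuclideanSpace.inner_eq_star_dotProduct, star_dotProduct,
      dotProduct_comm]
  rw [qform, hMx, dotProduct_sum, map_sum]
  refine Finset.sum_congr rfl fun k _ => ?_
  rw [dotProduct_smul, hb, smul_eq_mul, mul_right_comm, RCLike.star_def, RCLike.mul_conj,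
    mul_comm (sE M k), RCLike.re_mul_ofReal, ← RCLike.ofReal_pow, RCLike.ofReal_re]

theorem qform_lt_of_forall_sE_lt (hM : M.IsHermitian) {x : Fin d → 𝕜} (hx : x ≠ 0) {μ : ℝ}
    (h : ∀ k : Fin d, sE M k < μ ∨ (sortedEigenbasis hM).repr (WithLp.toLp 2 x) k = 0) :
    qform M x < μ * ∑ u, ‖x u‖ ^ 2 := by
  rw [qform_eq_sum_sE_mul hM, sum_norm_sq_eq_sum_norm_repr_sq (sortedEigenbasis hM), Finset.mul_sum]
  obtain ⟨k, hk⟩ : ∃ k, (sortedEigenbasis hM).repr (WithLp.toLp 2 x) k ≠ 0 := by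
    by_contra! h0
    exact hx (by simpa using (sortedEigenbasis hM).repr.map_eq_zero_iff.1 (PiLp.ext h0))
  refine Finset.sum_lt_sum (fun j _ => ?_) ⟨k, Finset.mem_univ k, ?_⟩
  · obtain hj | hj := h j
    · gcongr
    · simp [hj]
  · have := (h k).resolve_right hk
    gcongr

theorem le_qform_of_forall_le_sE (hM : M.IsHermitian) {x : Fin d → 𝕜} {μ : ℝ}
    (h : ∀ k : Fin d, μ ≤ sE M k ∨ (sortedEigenbasis hM).repr (WithLp.toLp 2 x) k = 0) :
    μ * ∑ u, ‖x u‖ ^ 2 ≤ qform M x := by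
  rw [qform_eq_sum_sE_mul hM, sum_norm_sq_eq_sum_norm_repr_sq (sortedEigenbasis hM), Finset.mul_sum]
  refine Finset.sum_le_sum fun j _ => ?_
  obtain hj | hj := h j
  · gcongr
  · simp [hj]

theorem exists_qform_lt_of_forall_sE_lt (hM : M.IsHermitian) {m : ℕ} (hm : m ≤ d) {μ : ℝ}
    (h : ∀ k < m, sE M k < μ) :
    ∃ x : Fin m → Fin d → 𝕜, ∀ c : Fin m → 𝕜, c ≠ 0 →
      qform M (∑ k, c k • x k) < μ * ∑ u, ‖(∑ k, c k • x k) u‖ ^ 2 := by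
  set b := sortedEigenbasis hM with hb
  have hind : LinearIndependent 𝕜 (b ∘ Fin.castLE hm) :=
    b.orthonormal.linearIndependent.comp _ (Fin.castLE_injective hm)
  refine ⟨fun k => (b (Fin.castLE hm k)).ofLp, fun c hc => qform_lt_of_forall_sE_lt hM ?_ ?_⟩
  · contrapose! hc
    refine funext (Fintype.linearIndependent_iff.1 hind c (WithLp.ofLp_injective 2 ?_))
    simpa using hc
  · intro j
    refine (lt_or_ge (j : ℕ) m).imp (h j) fun hj => ?_
    have hne (k : Fin m) : Fin.castLE hm k ≠ j := by
      intro hkj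
      have := congrArg Fin.val hkj
      simp only [Fin.val_castLE] at this
      omega
    simp [← hb, hne, WithLp.toLp_sum, b.repr_self]

theorem sE_lt_of_forall_qform_lt (hM : M.IsHermitian) {m : ℕ} (hm : m < d) {E : Type*}
    [AddCommGroup E] [Module 𝕜 E] (hE : m < Module.finrank 𝕜 E) (T : E →ₗ[𝕜] Fin d → 𝕜) {μ : ℝ}
    (hT : ∀ c, c ≠ 0 → qform M (T c) < μ * ∑ u, ‖T c u‖ ^ 2) : sE M m < μ := by
  by_contra! hμ
  have : FiniteDimensional 𝕜 E := Module.finite_of_finrank_pos (by omega)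
  let coords : E →ₗ[𝕜] Fin m → 𝕜 :=
    LinearMap.pi fun k => (sortedEigenbasis hM).toBasis.coord (Fin.castLE hm.le k) ∘ₗ
      (WithLp.linearEquiv 2 𝕜 (Fin d → 𝕜)).symm.toLinearMap ∘ₗ T
  obtain ⟨c, hc, hc0⟩ := (Submodule.ne_bot_iff _).1
    (coords.ker_ne_bot_of_finrank_lt (by simpa using hE))
  refine (hT c hc0).not_ge (le_qform_of_forall_le_sE hM fun k => ?_)
  obtain hk | hk := le_or_gt m (k : ℕ)
  · exact .inl (hμ.trans (sE_le_sE hM hk k.isLt))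
  · exact .inr (congrFun (LinearMap.mem_ker.1 hc) ⟨k, hk⟩)

theorem le_sE_of_forall_le_qform (hM : M.IsHermitian) {m : ℕ} (hm : m < d) {E : Type*}
    [AddCommGroup E] [Module 𝕜 E] [FiniteDimensional 𝕜 E] (hE : Module.finrank 𝕜 E ≤ m)
    (L : (Fin d → 𝕜) →ₗ[𝕜] E) {μ : ℝ}
    (hL : ∀ x, L x = 0 → μ * ∑ u, ‖x u‖ ^ 2 ≤ qform M x) : μ ≤ sE M m := by
  by_contra! hμ
  obtain ⟨x, hx⟩ := exists_qform_lt_of_forall_sE_lt hM hm fun k hk =>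
    (sE_le_sE hM (Nat.lt_succ_iff.1 hk) hm).trans_lt hμ
  obtain ⟨c, hc, hc0⟩ := (Submodule.ne_bot_iff _).1
    ((L ∘ₗ Fintype.linearCombination 𝕜 x).ker_ne_bot_of_finrank_lt (by simpa using by omega))
  exact (hx c hc0).not_ge (hL _ (by simpa [Fintype.linearCombination_apply] using hc))

theorem sE_lt_of_finrank_eigenspace_eq_one (hM : M.IsHermitian) {k m : ℕ} (hm : m < d) (hkm : k < m)
    (hsimple : Module.finrank 𝕜 (Module.End.eigenspace (Matrix.toLin' M) (sE M m : 𝕜)) = 1) :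
    sE M k < sE M m := by
  refine (sE_le_sE hM hkm.le hm).lt_of_ne fun heq => ?_
  set b := sortedEigenbasis hM
  have hmem (j : Fin d) (hj : sE M j = sE M m) :
      (b j).ofLp ∈ Module.End.eigenspace (Matrix.toLin' M) (sE M m : 𝕜) := by
    rw [Module.End.mem_eigenspace_iff, Matrix.toLin'_apply, mulVec_sortedEigenbasis, hj,
      RCLike.real_smul_eq_coe_smul (K := 𝕜)]
  let i : Fin d := ⟨k, hkm.trans hm⟩
  let j : Fin d := ⟨m, hm⟩
  have hj0 : (b j).ofLp ≠ 0 := fun h => b.toBasis.ne_zero j (by simpa using h)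
  obtain ⟨c, hc⟩ := (finrank_eq_one_iff_of_nonzero' ⟨(b j).ofLp, hmem j rfl⟩
    fun h => hj0 (congrArg Subtype.val h)).1 hsimple ⟨(b i).ofLp, hmem i heq⟩
  have hbi : b i = c • b j := WithLp.ofLp_injective 2 (congrArg Subtype.val hc).symm
  have horth : inner 𝕜 (b j) (b i) = 0 := b.orthonormal.2 (by simp [i, j, hkm.ne'])
  have hc0 : c = 0 := by simpa [hbi, inner_smul_right] using horth
  exact b.toBasis.ne_zero i (by simpa [hc0] using hbi)

theorem sE_eq_of_map_re_roots_charpoly_eq {𝕜' : Type*} [RCLike 𝕜']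
    {M' : Matrix (Fin d) (Fin d) 𝕜'} (hM : M.IsHermitian) (hM' : M'.IsHermitian)
    (h : M.charpoly.roots.map RCLike.re = M'.charpoly.roots.map RCLike.re) : sE M = sE M' := by
  have heig : hM.eigenvalues = hM'.eigenvalues := by
    have h₀ : hM.eigenvalues₀ = hM'.eigenvalues₀ := by
      simp_rw [← List.ofFn_inj, ← Matrix.IsHermitian.sort_roots_charpoly_eq_eigenvalues₀, h]
    unfold Matrix.IsHermitian.eigenvalues
    rw [h₀]
  funext i
  simp only [sE, sortedEigs, dif_pos hM, dif_pos hM', heig]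

theorem sE_map_ofReal {M : Matrix (Fin d) (Fin d) ℝ} (hM : M.IsHermitian) :
    sE (M.map (RCLike.ofReal : ℝ → 𝕜)) = sE M := by
  refine (sE_eq_of_map_re_roots_charpoly_eq hM
    (hM.map _ fun x => (RCLike.conj_ofReal x).symm) ?_).symm
  change _ = Multiset.map _ (M.map (algebraMap ℝ 𝕜)).charpoly.roots
  rw [Matrix.charpoly_map, hM.splits_charpoly.roots_map]
  simp

end Variational

section TwistedOperators

variable {V : Type*} {G : SimpleGraph V} [DecidableRel G.Adj]
  {𝕜 : Type*} [RCLike 𝕜] {q : V → ℝ} {σ τ : V → V → 𝕜}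

/-- A `U(1)`-connection on the vertex set `V` (a `{±1}`-connection when `𝕜 = ℝ`): `σ u v` is the
parallel transport from the fibre over `v` to the fibre over `u`. -/
structure IsConnection (σ : V → V → 𝕜) : Prop where
  norm_eq_one (u v : V) : ‖σ u v‖ = 1
  star_eq (u v : V) : star (σ u v) = σ v u

theorem isConnection_one : IsConnection (1 : V → V → 𝕜) :=
  ⟨fun _ _ => norm_one, fun _ _ => star_one 𝕜⟩

theorem IsConnection.mul_swap (hσ : IsConnection σ) (u v : V) : σ u v * σ v u = 1 := by
  rw [← hσ.star_eq u v, RCLike.star_def, RCLike.mul_conj, hσ.norm_eq_one]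
  simp

theorem norm_sub_mul_sq (hσ : IsConnection σ) (g : V → 𝕜) (u v : V) :
    ‖g u - σ u v * g v‖ ^ 2 =
      ‖g u‖ ^ 2 + ‖g v‖ ^ 2 - 2 * RCLike.re (star (g u) * (σ u v * g v)) := by
  rw [@norm_sub_sq 𝕜, norm_mul, hσ.norm_eq_one, one_mul, RCLike.inner_apply', RCLike.star_def]
  ring

theorem norm_sub_mul_swap (hσ : IsConnection σ) (g : V → 𝕜) (u v : V) :
    ‖g v - σ v u * g u‖ = ‖g u - σ u v * g v‖ := by
  have h : g v - σ v u * g u = -σ v u * (g u - σ u v * g v) := by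
    linear_combination (-g v) * hσ.mul_swap v u
  rw [h, norm_mul, norm_neg, hσ.norm_eq_one, one_mul]

variable (G) in
/-- The edge weights `f u * f v` of the ground state transform by `f`. -/
def edgeWeight (f : V → ℝ) (u v : V) : ℝ := if G.Adj u v then f u * f v else 0

theorem edgeWeight_swap (f : V → ℝ) (u v : V) : edgeWeight G f v u = edgeWeight G f u v := by
  simp only [edgeWeight, G.adj_comm v u, mul_comm (f v)]

variable [DecidableEq V]

variable (G q σ) in
/-- The Schrödinger operator on the graph `G` with potential `q`, acting on sections of the line
bundle with connection `σ`. -/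
def twistedOp : Matrix V V 𝕜 :=
  Matrix.of fun u v => (if u = v then (q u : 𝕜) else 0) - if G.Adj u v then σ u v else 0

theorem isHermitian_twistedOp (hσ : IsConnection σ) : (twistedOp G q σ).IsHermitian := by
  ext u v
  obtain rfl | huv := eq_or_ne u v
  · simp [twistedOp]
  · by_cases h : G.Adj u v
    · simpa [twistedOp, huv, huv.symm, h, h.symm] using hσ.star_eq v u
    · simp [twistedOp, huv, huv.symm, h, mt G.adj_symm h]

theorem schrodOp_eq_twistedOp {N : ℕ} (G : SimpleGraph (Fin N)) [DecidableRel G.Adj]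
    (q : Fin N → ℝ) : schrodOp G q = twistedOp G q 1 := by
  ext u v
  simp [schrodOp, twistedOp, diagonal_apply]

theorem twistedOp_one_map_ofReal :
    (twistedOp G q (1 : V → V → ℝ)).map (RCLike.ofReal : ℝ → 𝕜) = twistedOp G q 1 := by
  ext u v
  simp [twistedOp, apply_ite (RCLike.ofReal : ℝ → 𝕜)]

variable [Fintype V]

theorem twistedOp_mulVec_apply (x : V → 𝕜) (u : V) :
    (twistedOp G q σ *ᵥ x) u = q u * x u - ∑ v, if G.Adj u v then σ u v * x v else 0 := by
  simp [twistedOp, mulVec, dotProduct, sub_mul, ite_mul, Finset.sum_sub_distrib]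

theorem charpoly_twistedOp_eq_of_gauge {ψ : V → 𝕜} (hψ : ∀ u, ψ u ≠ 0)
    (h : ∀ u v, G.Adj u v → ψ u * τ u v = σ u v * ψ v) :
    (twistedOp G q τ).charpoly = (twistedOp G q σ).charpoly := by
  have hconj : twistedOp G q τ = diagonal ψ⁻¹ * (twistedOp G q σ * diagonal ψ) := by
    ext u v
    simp only [diagonal_mul, mul_diagonal, twistedOp, of_apply, Pi.inv_apply, mul_sub, sub_mul]
    congr 1
    · split_ifs with huv
      · simp [huv, mul_comm, hψ]
      · simp
    · split_ifs with huv
      · rw [← h u v huv, inv_mul_cancel_left₀ (hψ u)]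
      · simp
  have hinv : diagonal ψ * diagonal ψ⁻¹ = 1 := by simp [hψ]
  rw [hconj, charpoly_mul_comm, mul_assoc, hinv, mul_one]

theorem sum_edgeWeight {f : V → ℝ} {l : ℝ} (hf : twistedOp G q (1 : V → V → ℝ) *ᵥ f = l • f)
    (u : V) : ∑ v, edgeWeight G f u v = (q u - l) * f u ^ 2 := by
  have hu := congrFun hf u
  rw [twistedOp_mulVec_apply] at hu
  have hsum : ∑ v, edgeWeight G f u v = f u * ∑ v, if G.Adj u v then f v else 0 := by
    simp [edgeWeight, Finset.mul_sum]
  simp only [Real.ringHom_apply, Pi.one_apply, one_mul, Pi.smul_apply, smul_eq_mul] at hu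
  rw [hsum]
  linear_combination (-f u) * hu

theorem qform_twistedOp_ofReal_mul (f : V → ℝ) (g : V → 𝕜) :
    qform (twistedOp G q σ) (fun u => f u * g u) = ∑ u, q u * f u ^ 2 * ‖g u‖ ^ 2 -
      ∑ u, ∑ v, edgeWeight G f u v * RCLike.re (star (g u) * (σ u v * g v)) := by
  rw [qform, dotProduct, map_sum, ← Finset.sum_sub_distrib]
  refine Finset.sum_congr rfl fun u _ => ?_
  rw [twistedOp_mulVec_apply, mul_sub, map_sub]
  congr 1
  · have : star (f u * g u) * (q u * (f u * g u)) = ((q u * f u ^ 2 * ‖g u‖ ^ 2 : ℝ) : 𝕜) := by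
      push_cast
      rw [← RCLike.conj_mul]
      simp only [star_mul', RCLike.star_def, RCLike.conj_ofReal]
      ring
    rw [Pi.star_apply, this, RCLike.ofReal_re]
  · rw [Finset.mul_sum, map_sum]
    refine Finset.sum_congr rfl fun v _ => ?_
    rw [edgeWeight]
    split_ifs
    · rw [← RCLike.re_ofReal_mul]
      congr 1
      simp only [Pi.star_apply, star_mul', RCLike.star_def, RCLike.conj_ofReal, map_mul]
      ring
    · simp

theorem two_mul_qform_sub_eq_sum_edgeWeight (hσ : IsConnection σ) {f : V → ℝ} {l : ℝ}
    (hf : twistedOp G q (1 : V → V → ℝ) *ᵥ f = l • f) (g : V → 𝕜) :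
    2 * (qform (twistedOp G q σ) (fun u => f u * g u) - l * ∑ u, ‖(f u : 𝕜) * g u‖ ^ 2) =
      ∑ u, ∑ v, edgeWeight G f u v * ‖g u - σ u v * g v‖ ^ 2 := by
  have hrow : ∑ u, ∑ v, edgeWeight G f u v * ‖g u‖ ^ 2 = ∑ u, (q u - l) * f u ^ 2 * ‖g u‖ ^ 2 := by
    simp only [← Finset.sum_mul, sum_edgeWeight hf]
  have hcol : ∑ u, ∑ v, edgeWeight G f u v * ‖g v‖ ^ 2 = ∑ u, (q u - l) * f u ^ 2 * ‖g u‖ ^ 2 := by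
    rw [← hrow, Finset.sum_comm]
    simp only [edgeWeight_swap]
  have hnorm : l * ∑ u, ‖(f u : 𝕜) * g u‖ ^ 2 = ∑ u, l * f u ^ 2 * ‖g u‖ ^ 2 := by
    simp [mul_pow, Finset.mul_sum, mul_assoc]
  simp only [norm_sub_mul_sq hσ, mul_sub, mul_add, Finset.sum_sub_distrib, Finset.sum_add_distrib,
    hrow, hcol, qform_twistedOp_ofReal_mul, hnorm, sub_mul, mul_left_comm _ (2 : ℝ),
    ← Finset.mul_sum]
  ring

end TwistedOperators

theorem sE_twistedOp_one {N : ℕ} (G : SimpleGraph (Fin N)) [DecidableRel G.Adj] (q : Fin N → ℝ) :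
    sE (twistedOp G q (1 : Fin N → Fin N → ℂ)) = sE (schrodOp G q) := by
  rw [← twistedOp_one_map_ofReal, ← schrodOp_eq_twistedOp]
  exact sE_map_ofReal (schrodOp_eq_twistedOp G q ▸ isHermitian_twistedOp isConnection_one)

section SignChanges

variable {V : Type*} {G : SimpleGraph V} {f : V → ℝ}

variable (G f) in
/-- The set of edges counted by `signChanges`. -/
def signChangeEdges : Set (Sym2 V) :=
  {e | e ∈ G.edgeSet ∧ ∀ u v, e = s(u, v) → f u * f v < 0}

theorem mk_mem_signChangeEdges {u v : V} :
    s(u, v) ∈ signChangeEdges G f ↔ G.Adj u v ∧ f u * f v < 0 := by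
  refine ⟨fun h => ⟨h.1, h.2 u v rfl⟩, fun h => ⟨h.1, fun a b hab => ?_⟩⟩
  obtain ⟨rfl, rfl⟩ | ⟨rfl, rfl⟩ := Sym2.eq_iff.1 hab
  · exact h.2
  · exact mul_comm (f u) (f v) ▸ h.2

theorem edgeWeight_nonneg [DecidableRel G.Adj] {u v : V} (h : s(u, v) ∉ signChangeEdges G f) :
    0 ≤ edgeWeight G f u v := by
  rw [edgeWeight]
  split_ifs with huv
  · exact not_lt.1 fun hneg => h (mk_mem_signChangeEdges.2 ⟨huv, hneg⟩)
  · exact le_rfl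

theorem edgeWeight_neg [DecidableRel G.Adj] {u v : V} (h : s(u, v) ∈ signChangeEdges G f) :
    edgeWeight G f u v < 0 := by
  rw [edgeWeight, if_pos (mk_mem_signChangeEdges.1 h).1]
  exact (mk_mem_signChangeEdges.1 h).2

theorem le_sE_twistedOp_of_signChanges_le {N : ℕ} {G : SimpleGraph (Fin N)} [DecidableRel G.Adj]
    {q f : Fin N → ℝ} {𝕜 : Type*} [RCLike 𝕜] {σ : Fin N → Fin N → 𝕜} (hσ : IsConnection σ) {l : ℝ}
    (hf : twistedOp G q (1 : Fin N → Fin N → ℝ) *ᵥ f = l • f) (hf0 : ∀ u, f u ≠ 0) {m : ℕ}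
    (hm : m < N) (hφ : signChanges G f ≤ m) : l ≤ sE (twistedOp G q σ) m := by
  classical
  obtain ⟨ends, hends⟩ : ∃ p : Sym2 (Fin N) → Fin N × Fin N, ∀ e, s((p e).1, (p e).2) = e :=
    ⟨Quot.out, Quot.out_eq⟩
  let D : signChangeEdges G f → (Fin N → 𝕜) →ₗ[𝕜] 𝕜 := fun e =>
    LinearMap.proj (ends e).1 - σ (ends e).1 (ends e).2 • LinearMap.proj (ends e).2
  let divf : (Fin N → 𝕜) →ₗ[𝕜] (Fin N → 𝕜) := (diagonal fun u => (f u : 𝕜)⁻¹).mulVecLin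
  have hcard : Module.finrank 𝕜 (signChangeEdges G f → 𝕜) ≤ m := by
    rwa [Module.finrank_fintype_fun_eq_card, ← Nat.card_eq_fintype_card, Nat.card_coe_set_eq]
  refine le_sE_of_forall_le_qform (isHermitian_twistedOp hσ) hm hcard (LinearMap.pi D ∘ₗ divf)
    fun x hx => ?_
  set g := divf x
  have hfg : x = fun u => (f u : 𝕜) * g u := by
    funext u
    simp [g, divf, mulVec_diagonal, hf0 u]
  have hzero (u v : Fin N) (huv : s(u, v) ∈ signChangeEdges G f) : ‖g u - σ u v * g v‖ = 0 := by
    have hD : g _ - σ _ _ * g _ = 0 := congrFun hx ⟨s(u, v), huv⟩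
    obtain ⟨h₁, h₂⟩ | ⟨h₁, h₂⟩ := Sym2.eq_iff.1 (hends s(u, v))
    · rw [h₁, h₂] at hD
      rw [hD, norm_zero]
    · rw [h₁, h₂] at hD
      rw [← norm_sub_mul_swap hσ, hD, norm_zero]
  have hnonneg : 0 ≤ ∑ u, ∑ v, edgeWeight G f u v * ‖g u - σ u v * g v‖ ^ 2 := by
    refine Finset.sum_nonneg fun u _ => Finset.sum_nonneg fun v _ => ?_
    by_cases huv : s(u, v) ∈ signChangeEdges G f
    · simp [hzero u v huv]
    · have := edgeWeight_nonneg huv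
      positivity
  have htransform := two_mul_qform_sub_eq_sum_edgeWeight hσ hf g
  rw [hfg]
  linarith

end SignChanges

section MagneticPotentials

variable {V ι : Type*} {A : V → V → ℝ}

/-- The `U(1)`-connection `exp (i A)` of a magnetic potential `A`. -/
noncomputable def phase (A : V → V → ℝ) (u v : V) : ℂ := Complex.exp (A u v * Complex.I)

theorem phase_zero : phase (0 : V → V → ℝ) = 1 := by
  ext u v
  simp [phase]

theorem isConnection_phase (hA : ∀ u v, A v u = -A u v) : IsConnection (phase A) where
  norm_eq_one u v := Complex.norm_exp_ofReal_mul_I _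
  star_eq u v := by simp [phase, hA u v, ← Complex.exp_conj]

theorem sE_twistedOp_phase_eq_of_gauge {N : ℕ} {G : SimpleGraph (Fin N)} [DecidableRel G.Adj]
    {q : Fin N → ℝ} {A B : Fin N → Fin N → ℝ} (hA : ∀ u v, A v u = -A u v)
    (hB : ∀ u v, B v u = -B u v) {θ : Fin N → ℝ}
    (h : ∀ u v, G.Adj u v → B u v = A u v + θ v - θ u) :
    sE (twistedOp G q (phase B)) = sE (twistedOp G q (phase A)) := by
  refine sE_eq_of_map_re_roots_charpoly_eq (isHermitian_twistedOp (isConnection_phase hB))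
    (isHermitian_twistedOp (isConnection_phase hA)) ?_
  rw [charpoly_twistedOp_eq_of_gauge (ψ := fun u => Complex.exp (θ u * Complex.I))
    (fun u => Complex.exp_ne_zero _)]
  intro u v huv
  rw [phase, phase, h u v huv, ← Complex.exp_add, ← Complex.exp_add]
  push_cast
  ring_nf

/-- The magnetic potential `A` takes the value `α j` on the directed edge `(uE j, vE j)` and
vanishes on the remaining edges of `G`. -/
structure IsEdgePotential (G : SimpleGraph V) (uE vE : ι → V) (α : ι → ℝ) (A : V → V → ℝ) :
    Prop where
  swap (u v : V) : A v u = -A u v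
  apply_edge (j : ι) : A (uE j) (vE j) = α j
  apply_of_forall_ne {u v : V} : G.Adj u v → (∀ j, s(u, v) ≠ s(uE j, vE j)) → A u v = 0

theorem IsEdgePotential.smul {G : SimpleGraph V} {uE vE : ι → V} {α : ι → ℝ}
    (hA : IsEdgePotential G uE vE α A) (t : ℝ) : IsEdgePotential G uE vE (t • α) (t • A) where
  swap u v := by simp [hA.swap u v]
  apply_edge j := by simp [hA.apply_edge]
  apply_of_forall_ne huv h := by simp [hA.apply_of_forall_ne huv h]

theorem exists_isEdgePotential [Finite ι] {G : SimpleGraph V} {uE vE : ι → V}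
    (hadj : ∀ j, G.Adj (uE j) (vE j))
    (hdistinct : ∀ i j, s(uE i, vE i) = s(uE j, vE j) → i = j) (α : ι → ℝ) :
    ∃ A, IsEdgePotential G uE vE α A := by
  classical
  have := Fintype.ofFinite ι
  refine ⟨fun u v => ∑ j, ((if u = uE j ∧ v = vE j then α j else 0) -
    if v = uE j ∧ u = vE j then α j else 0), fun u v => ?_, fun j => ?_, fun {u v} _ h => ?_⟩
  · simp
  · rw [Fintype.sum_eq_single j]
    · simp [(hadj j).ne]
    · intro i hij
      have hne := mt (hdistinct i j) hij
      rw [if_neg, if_neg, sub_zero]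
      · rintro ⟨h₁, h₂⟩
        exact hne (by rw [← h₁, ← h₂, Sym2.eq_swap])
      · rintro ⟨h₁, h₂⟩
        exact hne (by rw [← h₁, ← h₂])
  · refine Finset.sum_eq_zero fun j _ => ?_
    rw [if_neg, if_neg, sub_zero]
    · rintro ⟨rfl, rfl⟩
      exact h j Sym2.eq_swap
    · rintro ⟨rfl, rfl⟩
      exact h j rfl

theorem schrodMag_eq_twistedOp {N β : ℕ} {G : SimpleGraph (Fin N)} [DecidableRel G.Adj]
    (q : Fin N → ℝ) {uE vE : Fin β → Fin N} (hadj : ∀ j, G.Adj (uE j) (vE j))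
    (hdistinct : ∀ i j, s(uE i, vE i) = s(uE j, vE j) → i = j) {α : Fin β → ℝ}
    {A : Fin N → Fin N → ℝ} (hA : IsEdgePotential G uE vE α A) :
    schrodMag G q uE vE α = twistedOp G q (phase A) := by
  ext u v
  have hentry (j : Fin β) (hj : s(u, v) ≠ s(uE j, vE j)) :
      (if u = uE j ∧ v = vE j then 1 - Complex.exp (Complex.I * (α j : ℝ))
        else if u = vE j ∧ v = uE j then 1 - Complex.exp (-(Complex.I * (α j : ℝ)))
        else 0) = 0 := by
    rw [if_neg, if_neg]
    · rintro ⟨rfl, rfl⟩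
      exact hj Sym2.eq_swap
    · rintro ⟨rfl, rfl⟩
      exact hj rfl
  rw [schrodMag, schrodOp_eq_twistedOp, Matrix.add_apply, Matrix.sum_apply]
  change (twistedOp G q (1 : Fin N → Fin N → ℝ)).map (RCLike.ofReal : ℝ → ℂ) u v + _ = _
  rw [twistedOp_one_map_ofReal]
  simp only [twistedOp, of_apply]
  by_cases h : ∃ j, s(u, v) = s(uE j, vE j)
  · obtain ⟨j, hj⟩ := h
    have huv : G.Adj u v := by
      rw [← SimpleGraph.mem_edgeSet, hj]
      exact hadj j
    rw [Fintype.sum_eq_single j fun i hij => hentry i fun hi => hij (hdistinct i j (hi ▸ hj))]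
    obtain ⟨rfl, rfl⟩ | ⟨rfl, rfl⟩ := Sym2.eq_iff.1 hj
    · simp [phase, hadj j, hA.apply_edge, mul_comm]
    · simp only [huv.ne, ↓reduceIte, huv, Pi.one_apply, zero_sub, false_and, and_self, phase,
        hA.swap (uE j), hA.apply_edge, Complex.ofReal_neg, mul_comm, mul_neg]
      ring
  · push Not at h
    rw [Finset.sum_eq_zero fun j _ => hentry j (h j), add_zero]
    split_ifs with huv huv'
    all_goals simp_all [phase, hA.apply_of_forall_ne]

end MagneticPotentials

section OneForms

variable {V : Type*}

theorem exists_potential_of_isAcyclic {M : Type*} [AddCommGroup M] {T : SimpleGraph V}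
    (hT : T.IsAcyclic) {ω : V → V → M} (hω : ∀ u v, ω v u = -ω u v) :
    ∃ θ : V → M, ∀ u v, T.Adj u v → ω u v = θ v - θ u := by
  have hpath (v : V) : ∃ p : T.Walk (T.connectedComponentMk v).out v, p.IsPath :=
    (SimpleGraph.ConnectedComponent.exact (T.connectedComponentMk v).out_eq).exists_isPath
  choose path hpath using hpath
  let integral {r v : V} (p : T.Walk r v) : M := (p.darts.map fun d => ω d.fst d.snd).sum
  have integral_concat {r u v : V} (p : T.Walk r u) (h : T.Adj u v) :
      integral (p.concat h) = integral p + ω u v := by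
    simp [integral, SimpleGraph.Walk.darts_concat]
  have integral_adj {r u v : V} (h : T.Adj u v) {p : T.Walk r u} {p' : T.Walk r v} (hp : p.IsPath)
      (hp' : p'.IsPath) : ω u v = integral p' - integral p := by
    by_cases hu : u ∈ p'.support
    · rw [hT.path_concat hp hp' h hu, integral_concat, add_sub_cancel_left]
    · have hv := hT.mem_support_of_ne_mem_support_of_adj_of_isPath hp hp' h hu
      rw [hT.path_concat hp' hp h.symm hv, integral_concat, hω u v]
      abel
  refine ⟨fun v => integral (path v), fun u v huv => ?_⟩
  have hroot : (T.connectedComponentMk v).out = (T.connectedComponentMk u).out := by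
    rw [SimpleGraph.ConnectedComponent.connectedComponentMk_eq_of_adj huv]
  have hcopy := integral_adj huv (hpath u)
    ((SimpleGraph.Walk.isPath_copy (p := path v) (hu := hroot) (hv := rfl)).2 (hpath v))
  simpa [integral] using hcopy

theorem exists_ne_zero_antisymm_of_finrank_lt [LinearOrder V] {S : Set (Sym2 V)} [Finite S]
    (hS : ∀ e ∈ S, ¬e.IsDiag) {F : Type*} [AddCommGroup F] [Module ℝ F] [FiniteDimensional ℝ F]
    (hF : Module.finrank ℝ F < S.ncard) (L : (V → V → ℝ) →ₗ[ℝ] F) :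
    ∃ ω ≠ 0, (∀ u v, ω v u = -ω u v) ∧ (∀ u v, s(u, v) ∉ S → ω u v = 0) ∧ L ω = 0 := by
  classical
  have := Fintype.ofFinite S
  let orient (u v : V) : ℝ := if u < v then 1 else if v < u then -1 else 0
  let T : (S → ℝ) →ₗ[ℝ] V → V → ℝ := LinearMap.pi fun u => LinearMap.pi fun v =>
    if h : s(u, v) ∈ S then orient u v • LinearMap.proj ⟨s(u, v), h⟩ else 0
  have hT_mem (c : S → ℝ) {u v : V} (h : s(u, v) ∈ S) : T c u v = orient u v * c ⟨s(u, v), h⟩ := by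
    simp [T, h]
  have hT_notMem (c : S → ℝ) {u v : V} (h : s(u, v) ∉ S) : T c u v = 0 := by
    simp [T, h]
  obtain ⟨c, hc, hc0⟩ := (Submodule.ne_bot_iff _).1 ((L ∘ₗ T).ker_ne_bot_of_finrank_lt (by
    rwa [Module.finrank_fintype_fun_eq_card, ← Nat.card_eq_fintype_card, Nat.card_coe_set_eq]))
  refine ⟨T c, fun h => hc0 (funext ?_), fun u v => ?_, fun u v => hT_notMem c, hc⟩
  · rintro ⟨e, he⟩
    induction e with | _ u v
    have huv : u ≠ v := hS _ he
    have hne : orient u v ≠ 0 := by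
      obtain h | h := huv.lt_or_gt <;> simp [orient, h, h.not_gt]
    have := congrFun₂ h u v
    rw [hT_mem c he] at this
    exact (mul_eq_zero.1 this).resolve_left hne
  · by_cases h : s(u, v) ∈ S
    · have hswap : s(v, u) = s(u, v) := Sym2.eq_swap
      rw [hT_mem c h, hT_mem c (hswap ▸ h)]
      simp only [hswap]
      obtain huv | rfl | huv := lt_trichotomy u v
      · simp [orient, huv, huv.not_gt]
      · simp [orient]
      · simp [orient, huv, huv.not_gt]
    · rw [hT_notMem c h, hT_notMem c (Sym2.eq_swap ▸ h), neg_zero]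

end OneForms

section QuadraticForms

theorem eventually_forall_neg_of_homogeneous {X E : Type*} [TopologicalSpace X]
    [NormedAddCommGroup E] [NormedSpace ℝ E] [ProperSpace E] {F : X → E → ℝ}
    (hF : Continuous fun p : X × E => F p.1 p.2)
    (hhom : ∀ x (a : ℝ) c, F x (a • c) = a ^ 2 * F x c) {x₀ : X} (h₀ : ∀ c ≠ 0, F x₀ c < 0) :
    ∀ᶠ x in 𝓝 x₀, ∀ c ≠ 0, F x c < 0 := by
  have hsphere : ∀ᶠ x in 𝓝 x₀, ∀ c ∈ Metric.sphere (0 : E) 1, F x c < 0 := by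
    refine (isCompact_sphere (0 : E) 1).eventually_forall_of_forall_eventually fun c hc => ?_
    have hc0 : c ≠ 0 := Metric.ne_of_mem_sphere hc one_ne_zero
    exact (hF.tendsto (x₀, c)).eventually_lt_const (h₀ c hc0)
  filter_upwards [hsphere] with x hx c hc
  have hnorm : 0 < ‖c‖ := norm_pos_iff.2 hc
  have hunit : ‖c‖⁻¹ • c ∈ Metric.sphere (0 : E) 1 := by simp [norm_smul, hnorm.ne']
  have := hx _ hunit
  rw [hhom] at this
  exact (pos_iff_neg_of_mul_neg this).1 (by positivity)

variable {P ι : Type*} [Fintype P] [Fintype ι] {W : P → ℝ}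

theorem sum_mul_norm_sq_neg_of_sum_mul_sq_neg {r : ι → P → ℝ}
    (h : ∀ a : ι → ℝ, a ≠ 0 → ∑ p, W p * (∑ i, a i * r i p) ^ 2 < 0) {c : ι → ℂ} (hc : c ≠ 0) :
    ∑ p, W p * ‖∑ i, c i * (r i p : ℂ)‖ ^ 2 < 0 := by
  have hsplit : ∑ p, W p * ‖∑ i, c i * (r i p : ℂ)‖ ^ 2 =
      ∑ p, W p * (∑ i, (c i).re * r i p) ^ 2 + ∑ p, W p * (∑ i, (c i).im * r i p) ^ 2 := by
    simp only [Complex.sq_norm, Complex.normSq_apply, Complex.re_sum, Complex.im_sum,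
      Complex.re_mul_ofReal, Complex.im_mul_ofReal, ← Finset.sum_add_distrib, ← mul_add, ← sq]
  have hle (a : ι → ℝ) : ∑ p, W p * (∑ i, a i * r i p) ^ 2 ≤ 0 := by
    obtain rfl | ha := eq_or_ne a 0
    · simp
    · exact (h a ha).le
  rw [hsplit]
  by_cases hre : (fun i => (c i).re) = 0
  · have him : (fun i => (c i).im) ≠ 0 := fun him =>
      hc (funext fun i => Complex.ext (congrFun hre i) (congrFun him i))
    exact add_neg_of_nonpos_of_neg (hle _) (h _ him)
  · exact add_neg_of_neg_of_nonpos (h _ hre) (hle _)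

theorem sum_mul_sq_neg_of_orthogonal {s : P → ℝ} (hs : ∑ p, W p * s p ^ 2 < 0) {r : ι → P → ℝ}
    (hsr : ∀ i, ∑ p, W p * (s p * r i p) = 0)
    (hr : ∀ a : ι → ℝ, a ≠ 0 → ∑ p, W p * (∑ i, a i * r i p) ^ 2 < 0) {a : Option ι → ℝ}
    (ha : a ≠ 0) : ∑ p, W p * (∑ i, a i * i.elim (s p) (r · p)) ^ 2 < 0 := by
  let b (i : ι) : ℝ := a (some i)
  have hcross : ∑ p, W p * (s p * ∑ i, b i * r i p) = 0 := by
    have (p : P) : W p * (s p * ∑ i, b i * r i p) = ∑ i, b i * (W p * (s p * r i p)) := by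
      simp only [Finset.mul_sum]
      exact Finset.sum_congr rfl fun i _ => by ring
    simp_rw [this]
    rw [Finset.sum_comm]
    simp [← Finset.mul_sum, hsr]
  have hexpand : ∑ p, W p * (∑ i, a i * i.elim (s p) (r · p)) ^ 2 =
      a none ^ 2 * ∑ p, W p * s p ^ 2 + ∑ p, W p * (∑ i, b i * r i p) ^ 2 := by
    rw [← add_zero (∑ p, W p * (∑ i, b i * r i p) ^ 2), ← mul_zero (2 * a none), ← hcross]
    simp only [Finset.mul_sum (Finset.univ : Finset P), ← Finset.sum_add_distrib]
    refine Finset.sum_congr rfl fun p _ => ?_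
    simp only [Fintype.sum_option, Option.elim, b]
    ring
  rw [hexpand]
  by_cases hb : b = 0
  · have hnone : a none ≠ 0 := fun h => ha (funext (Option.rec h (congrFun hb)))
    have : 0 < a none ^ 2 := by positivity
    simpa [hb] using mul_neg_of_pos_of_neg this hs
  · exact add_neg_of_nonpos_of_neg (mul_nonpos_of_nonneg_of_nonpos (sq_nonneg _) hs.le) (hr b hb)

end QuadraticForms

section UpperBound

/-- The continuous extension to `t = 0` of the function `(I / t) * (1 - exp (i t w))`. -/
noncomputable def phaseSlope (w : ℝ) : ℝ → ℂ :=
  dslope (fun t : ℝ => -Complex.I * Complex.exp (t * w * Complex.I)) 0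

theorem phaseSlope_of_ne (w : ℝ) {t : ℝ} (ht : t ≠ 0) :
    phaseSlope w t = Complex.I / t * (1 - Complex.exp (t * w * Complex.I)) := by
  simp only [phaseSlope, dslope_of_ne _ ht, slope, sub_zero, vsub_eq_sub, Complex.real_smul,
    Complex.ofReal_inv, Complex.ofReal_zero, zero_mul, Complex.exp_zero]
  ring

theorem hasDerivAt_neg_I_mul_exp (w t : ℝ) :
    HasDerivAt (fun t : ℝ => -Complex.I * Complex.exp (t * w * Complex.I))
      (w * Complex.exp (t * w * Complex.I)) t := by
  have h := (((hasDerivAt_id t).ofReal_comp.mul_const (w : ℂ)).mul_const Complex.I).cexp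
  refine (h.const_mul (-Complex.I)).congr_deriv ?_
  rw [id, Complex.ofReal_one]
  linear_combination (-(w : ℂ) * Complex.exp (t * w * Complex.I)) * Complex.I_mul_I

theorem phaseSlope_zero (w : ℝ) : phaseSlope w 0 = w := by
  rw [phaseSlope, dslope_same, (hasDerivAt_neg_I_mul_exp w 0).deriv]
  simp

theorem continuous_phaseSlope (w : ℝ) : Continuous (phaseSlope w) := by
  refine continuous_iff_continuousAt.2 fun t => ?_
  obtain rfl | ht := eq_or_ne t 0
  · exact continuousAt_dslope_same.2 (hasDerivAt_neg_I_mul_exp w 0).differentiableAt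
  · exact (continuousAt_dslope_of_ne ht).2 (hasDerivAt_neg_I_mul_exp w t).continuousAt

variable {V κ : Type*}

/-- A family of test functions, in the ground state representation: the functions `y k` together
with the constant function `I / t`, whose size blows up at the rate at which its twisted differences
would otherwise vanish. -/
noncomputable def testFun (y : κ → V → ℝ) (t : ℝ) (i : Option κ) (u : V) : ℂ :=
  i.elim (Complex.I / t) fun k => y k u

/-- The twisted differences of `testFun y t` across the pair `(u, v)`, for the magnetic potential
`t • ω`; at `t = 0` they are continued by the real values `ω u v` and `y k u - y k v`. -/
noncomputable def testDiff (ω : V → V → ℝ) (y : κ → V → ℝ) (t : ℝ) (i : Option κ) (u v : V) : ℂ :=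
  i.elim (phaseSlope (ω u v) t) fun k => y k u - phase (t • ω) u v * y k v

variable {ω : V → V → ℝ} {y : κ → V → ℝ}

theorem testFun_sub_phase_mul {t : ℝ} (ht : t ≠ 0) (i : Option κ) (u v : V) :
    testFun y t i u - phase (t • ω) u v * testFun y t i v = testDiff ω y t i u v := by
  cases i with
  | none =>
    simp only [testFun, testDiff, Option.elim, phaseSlope_of_ne _ ht, phase, Pi.smul_apply,
      smul_eq_mul, Complex.ofReal_mul]
    ring
  | some k => rfl

theorem testDiff_zero (i : Option κ) (u v : V) :
    testDiff ω y 0 i u v = ((i.elim (ω u v) fun k => y k u - y k v : ℝ) : ℂ) := by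
  cases i <;> simp [testDiff, phaseSlope_zero, phase]

theorem continuous_testDiff (i : Option κ) (u v : V) :
    Continuous fun t => testDiff ω y t i u v := by
  cases i with
  | none => exact continuous_phaseSlope _
  | some k =>
    simp only [testDiff, Option.elim, phase, Pi.smul_apply, smul_eq_mul]
    fun_prop

theorem sE_twistedOp_phase_lt_of_sum_neg {N : ℕ} {G : SimpleGraph (Fin N)} [DecidableRel G.Adj]
    {q f : Fin N → ℝ} {l : ℝ} (hf : twistedOp G q (1 : Fin N → Fin N → ℝ) *ᵥ f = l • f)
    {ω : Fin N → Fin N → ℝ} (hω : ∀ u v, ω v u = -ω u v) {m : ℕ} (hm : m < N)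
    {y : Fin m → Fin N → ℝ} {t : ℝ} (ht : t ≠ 0)
    (hneg : ∀ c : Option (Fin m) → ℂ, c ≠ 0 → ∑ p : Fin N × Fin N,
      edgeWeight G f p.1 p.2 * ‖∑ i, c i * testDiff ω y t i p.1 p.2‖ ^ 2 < 0) :
    sE (twistedOp G q (phase (t • ω))) m < l := by
  have hσ : IsConnection (phase (t • ω)) := isConnection_phase fun u v => by simp [hω u v]
  let T : (Option (Fin m) → ℂ) →ₗ[ℂ] Fin N → ℂ :=
    Fintype.linearCombination ℂ fun i u => f u * testFun y t i u
  refine sE_lt_of_forall_qform_lt (isHermitian_twistedOp hσ) hm (by simp) T fun c hc => ?_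
  let g (u : Fin N) : ℂ := ∑ i, c i * testFun y t i u
  have hT : T c = fun u => (f u : ℂ) * g u := by
    funext u
    simp only [T, g, Fintype.linearCombination_apply, Finset.sum_apply, Pi.smul_apply, smul_eq_mul,
      Finset.mul_sum, mul_left_comm]
  have hdiff (u v : Fin N) :
      g u - phase (t • ω) u v * g v = ∑ i, c i * testDiff ω y t i u v := by
    simp only [g, Finset.mul_sum, ← Finset.sum_sub_distrib, ← testFun_sub_phase_mul ht]
    exact Finset.sum_congr rfl fun i _ => by ring
  have htransform := two_mul_qform_sub_eq_sum_edgeWeight hσ hf g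
  have := hneg c hc
  simp only [hdiff, ← Fintype.sum_prod_type'
    fun u v => edgeWeight G f u v * ‖∑ i, c i * testDiff ω y t i u v‖ ^ 2] at htransform
  rw [hT]
  simp only [Complex.coe_algebraMap] at htransform ⊢
  linarith

theorem eventually_sum_norm_testDiff_sq_neg [Fintype V] [Fintype κ] {W : V × V → ℝ}
    (hneg : ∀ a : Option κ → ℝ, a ≠ 0 →
      ∑ p, W p * (∑ i, a i * i.elim (ω p.1 p.2) fun k => y k p.1 - y k p.2) ^ 2 < 0) :
    ∀ᶠ t in 𝓝 0, ∀ c : Option κ → ℂ, c ≠ 0 →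
      ∑ p, W p * ‖∑ i, c i * testDiff ω y t i p.1 p.2‖ ^ 2 < 0 := by
  refine eventually_forall_neg_of_homogeneous ?_ (fun t a c => ?_) fun c hc => ?_
  · have := continuous_testDiff (ω := ω) (y := y)
    fun_prop
  · simp only [Pi.smul_apply, smul_mul_assoc, ← Finset.smul_sum, norm_smul, mul_pow,
      Real.norm_eq_abs, sq_abs, Finset.mul_sum, mul_left_comm]
  · simp only [testDiff_zero]
    exact sum_mul_norm_sq_neg_of_sum_mul_sq_neg hneg hc

theorem sum_edgeWeight_mul_sq_neg_of_qform_lt {G : SimpleGraph V} [DecidableRel G.Adj]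
    [DecidableEq V] [Fintype V] [Fintype κ] {q f : V → ℝ} {l : ℝ}
    (hf : twistedOp G q (1 : V → V → ℝ) *ᵥ f = l • f) (hf0 : ∀ u, f u ≠ 0) {x : κ → V → ℝ}
    {b : κ → ℝ} (hx : qform (twistedOp G q (1 : V → V → ℝ)) (∑ k, b k • x k) <
      l * ∑ u, ‖(∑ k, b k • x k) u‖ ^ 2) :
    ∑ p : V × V, edgeWeight G f p.1 p.2 *
      (∑ k, b k * (x k p.1 / f p.1 - x k p.2 / f p.2)) ^ 2 < 0 := by
  let g (u : V) : ℝ := ∑ k, b k * (x k u / f u)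
  have hfg : ∑ k, b k • x k = fun u => f u * g u := by
    funext u
    have := hf0 u
    simp only [g, Finset.sum_apply, Pi.smul_apply, smul_eq_mul, Finset.mul_sum]
    exact Finset.sum_congr rfl fun k _ => by field_simp
  have hdiff (u v : V) : ∑ k, b k * (x k u / f u - x k v / f v) = g u - g v := by
    simp only [g, mul_sub, Finset.sum_sub_distrib]
  have htransform := two_mul_qform_sub_eq_sum_edgeWeight isConnection_one hf g
  simp only [Pi.one_apply, one_mul, Real.norm_eq_abs, sq_abs] at htransform
  simp only [hfg, Real.norm_eq_abs, sq_abs] at hx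
  simp only [hdiff, Fintype.sum_prod_type, ← htransform]
  simp only [Real.ringHom_apply] at hx ⊢
  linarith

theorem sum_edgeWeight_mul_sq_neg_of_ne_zero [Fintype V] {G : SimpleGraph V} [DecidableRel G.Adj]
    {f : V → ℝ} (hω : ω ≠ 0) (hoff : ∀ u v, s(u, v) ∉ signChangeEdges G f → ω u v = 0) :
    ∑ p : V × V, edgeWeight G f p.1 p.2 * ω p.1 p.2 ^ 2 < 0 := by
  have hle (u v : V) : edgeWeight G f u v * ω u v ^ 2 ≤ 0 := by
    by_cases h : s(u, v) ∈ signChangeEdges G f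
    · exact mul_nonpos_of_nonpos_of_nonneg (edgeWeight_neg h).le (sq_nonneg _)
    · simp [hoff u v h]
  obtain ⟨u, v, huv⟩ : ∃ u v, ω u v ≠ 0 := by
    by_contra! h
    exact hω (funext₂ h)
  refine Finset.sum_neg' (fun p _ => hle p.1 p.2) ⟨(u, v), Finset.mem_univ _, ?_⟩
  exact mul_neg_of_neg_of_pos (edgeWeight_neg (not_not.1 (mt (hoff u v) huv))) (by positivity)

theorem exists_antisymm_eventually_sE_twistedOp_phase_lt {N : ℕ} {G : SimpleGraph (Fin N)}
    [DecidableRel G.Adj] {q f : Fin N → ℝ} {l : ℝ}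
    (hf : twistedOp G q (1 : Fin N → Fin N → ℝ) *ᵥ f = l • f) (hf0 : ∀ u, f u ≠ 0) {m : ℕ}
    (hm : m < N) (hlt : ∀ k < m, sE (twistedOp G q (1 : Fin N → Fin N → ℝ)) k < l)
    (hφ : m < signChanges G f) :
    ∃ ω : Fin N → Fin N → ℝ, (∀ u v, ω v u = -ω u v) ∧
      ∀ᶠ t : ℝ in 𝓝[≠] 0, sE (twistedOp G q (phase (t • ω))) m < l := by
  obtain ⟨x, hx⟩ := exists_qform_lt_of_forall_sE_lt (isHermitian_twistedOp isConnection_one) hm.le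
    hlt
  let y (k : Fin m) (u : Fin N) : ℝ := x k u / f u
  let cross : (Fin N → Fin N → ℝ) →ₗ[ℝ] Fin m → ℝ := LinearMap.pi fun k =>
    ∑ p : Fin N × Fin N, (edgeWeight G f p.1 p.2 * (y k p.1 - y k p.2)) •
      LinearMap.proj (φ := fun _ => ℝ) p.2 ∘ₗ LinearMap.proj (φ := fun _ => Fin N → ℝ) p.1
  obtain ⟨ω, hω0, hω, hoff, hcross⟩ := exists_ne_zero_antisymm_of_finrank_lt
    (S := signChangeEdges G f) (fun e he => G.not_isDiag_of_mem_edgeSet he.1)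
    ((Module.finrank_fin_fun ℝ).trans_lt hφ) cross
  have hωneg := sum_edgeWeight_mul_sq_neg_of_ne_zero hω0 hoff
  have horth (k : Fin m) : ∑ p : Fin N × Fin N,
      edgeWeight G f p.1 p.2 * (ω p.1 p.2 * (y k p.1 - y k p.2)) = 0 := by
    rw [← show cross ω k = 0 from congrFun hcross k]
    simp only [cross, LinearMap.pi_apply, LinearMap.sum_apply, LinearMap.smul_apply,
      LinearMap.comp_apply, LinearMap.proj_apply, smul_eq_mul]
    exact Finset.sum_congr rfl fun p _ => by ring
  have hneg (a : Option (Fin m) → ℝ) (ha : a ≠ 0) := sum_mul_sq_neg_of_orthogonal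
    hωneg horth (fun b hb => sum_edgeWeight_mul_sq_neg_of_qform_lt hf hf0 (hx b hb)) ha
  refine ⟨ω, hω, ?_⟩
  filter_upwards [(eventually_sum_norm_testDiff_sq_neg hneg).filter_mono nhdsWithin_le_nhds,
    self_mem_nhdsWithin] with t hFt ht
  exact sE_twistedOp_phase_lt_of_sum_neg hf hω hm ht hFt

end UpperBound

section LocalMinimum

variable {N : ℕ} {G : SimpleGraph (Fin N)} [DecidableRel G.Adj] {q f : Fin N → ℝ} {m : ℕ}

theorem le_signChanges_of_forall_sE_lt {l : ℝ}
    (hf : twistedOp G q (1 : Fin N → Fin N → ℝ) *ᵥ f = l • f) (hf0 : ∀ u, f u ≠ 0) (hm : m < N)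
    (hlt : ∀ k < m, sE (twistedOp G q (1 : Fin N → Fin N → ℝ)) k < l) : m ≤ signChanges G f :=
  not_lt.1 fun h =>
    (le_sE_twistedOp_of_signChanges_le isConnection_one hf hf0 (h.trans hm) le_rfl).not_gt (hlt _ h)

variable {β : ℕ} {uE vE : Fin β → Fin N}

theorem sE_schrodMag_zero (hadj : ∀ j, G.Adj (uE j) (vE j))
    (hdistinct : ∀ i j, s(uE i, vE i) = s(uE j, vE j) → i = j) :
    sE (schrodMag G q uE vE 0) = sE (schrodOp G q) := by
  have hzero : IsEdgePotential G uE vE 0 0 := by constructor <;> simp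
  rw [schrodMag_eq_twistedOp q hadj hdistinct hzero, phase_zero, sE_twistedOp_one]

theorem le_sE_schrodMag_of_signChanges_le (hadj : ∀ j, G.Adj (uE j) (vE j))
    (hdistinct : ∀ i j, s(uE i, vE i) = s(uE j, vE j) → i = j) {l : ℝ}
    (hf : twistedOp G q (1 : Fin N → Fin N → ℝ) *ᵥ f = l • f) (hf0 : ∀ u, f u ≠ 0) (hm : m < N)
    (hφ : signChanges G f ≤ m) (α : Fin β → ℝ) : l ≤ sE (schrodMag G q uE vE α) m := by
  obtain ⟨A, hA⟩ := exists_isEdgePotential hadj hdistinct α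
  rw [schrodMag_eq_twistedOp q hadj hdistinct hA]
  exact le_sE_twistedOp_of_signChanges_le (isConnection_phase hA.swap) hf hf0 hm hφ

theorem exists_forall_sE_schrodMag_eq_of_isAcyclic (hadj : ∀ j, G.Adj (uE j) (vE j))
    (hdistinct : ∀ i j, s(uE i, vE i) = s(uE j, vE j) → i = j)
    (hforest : (G.deleteEdges {e | ∃ j, e = s(uE j, vE j)}).IsAcyclic)
    {ω : Fin N → Fin N → ℝ} (hω : ∀ u v, ω v u = -ω u v) :
    ∃ α : Fin β → ℝ, ∀ t : ℝ,
      sE (schrodMag G q uE vE (t • α)) = sE (twistedOp G q (phase (t • ω))) := by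
  obtain ⟨θ, hθ⟩ := exists_potential_of_isAcyclic hforest hω
  let A (u v : Fin N) : ℝ := ω u v - (θ v - θ u)
  have hA : IsEdgePotential G uE vE (fun j => A (uE j) (vE j)) A := by
    refine ⟨fun u v => ?_, fun j => rfl, fun {u v} huv h => ?_⟩
    · simp only [A, hω u v]
      ring
    · exact sub_eq_zero.2 (hθ u v (SimpleGraph.deleteEdges_adj.2 ⟨huv, by simpa using h⟩))
  refine ⟨fun j => A (uE j) (vE j), fun t => ?_⟩
  rw [schrodMag_eq_twistedOp q hadj hdistinct (hA.smul t)]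
  refine sE_twistedOp_phase_eq_of_gauge (θ := -(t • θ)) (fun u v => ?_) (hA.smul t).swap
    fun u v _ => ?_
  · simp [hω u v]
  · simp only [A, Pi.smul_apply, Pi.neg_apply, smul_eq_mul]
    ring

theorem not_isLocalMin_sE_schrodMag_of_lt_signChanges (hadj : ∀ j, G.Adj (uE j) (vE j))
    (hdistinct : ∀ i j, s(uE i, vE i) = s(uE j, vE j) → i = j)
    (hforest : (G.deleteEdges {e | ∃ j, e = s(uE j, vE j)}).IsAcyclic) (hm : m < N)
    (hf : schrodOp G q *ᵥ f = sE (schrodOp G q) m • f) (hf0 : ∀ u, f u ≠ 0)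
    (hlt : ∀ k < m, sE (schrodOp G q) k < sE (schrodOp G q) m) (hφ : m < signChanges G f) :
    ¬IsLocalMin (fun α : Fin β → ℝ => sE (schrodMag G q uE vE α) m) 0 := by
  intro hmin
  obtain ⟨ω, hω, hdecrease⟩ := exists_antisymm_eventually_sE_twistedOp_phase_lt
    (schrodOp_eq_twistedOp G q ▸ hf) hf0 hm (schrodOp_eq_twistedOp G q ▸ hlt) hφ
  obtain ⟨α, hα⟩ := exists_forall_sE_schrodMag_eq_of_isAcyclic (q := q) hadj hdistinct hforest hω
  have hray : Filter.Tendsto (fun t : ℝ => t • α) (𝓝[≠] 0) (𝓝 0) := by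
    have : Continuous fun t : ℝ => t • α := by fun_prop
    simpa using (this.tendsto 0).mono_left nhdsWithin_le_nhds
  obtain ⟨t, hlow, hhigh⟩ := ((hray.eventually hmin).and hdecrease).exists
  beta_reduce at hlow
  rw [sE_schrodMag_zero hadj hdistinct, hα, schrodOp_eq_twistedOp] at hlow
  exact hlow.not_gt hhigh

end LocalMinimum

theorem mag_local_min_iff_no_surplus_general {N β : ℕ} (G : SimpleGraph (Fin N))
    [DecidableRel G.Adj] (q : Fin N → ℝ) (uE vE : Fin β → Fin N)
    (hadj : ∀ j, G.Adj (uE j) (vE j))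
    (hdistinct : ∀ i j, s(uE i, vE i) = s(uE j, vE j) → i = j)
    (hforest : (G.deleteEdges {e | ∃ j, e = s(uE j, vE j)}).IsAcyclic) {m : ℕ} (hm : m < N)
    (f : Fin N → ℝ) (hf : schrodOp G q *ᵥ f = sE (schrodOp G q) m • f) (hf0 : ∀ u, f u ≠ 0)
    (hlt : ∀ k < m, sE (schrodOp G q) k < sE (schrodOp G q) m) :
    IsLocalMin (fun α : Fin β → ℝ => sE (schrodMag G q uE vE α) m) 0 ↔ signChanges G f = m := by
  have hf' := schrodOp_eq_twistedOp G q ▸ hf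
  have hle : m ≤ signChanges G f :=
    le_signChanges_of_forall_sE_lt hf' hf0 hm (schrodOp_eq_twistedOp G q ▸ hlt)
  refine ⟨fun hmin => hle.antisymm' (not_lt.1 fun hφ => ?_), fun hφ => .of_forall fun α => ?_⟩
  · exact not_isLocalMin_sE_schrodMag_of_lt_signChanges hadj hdistinct hforest hm hf hf0 hlt hφ hmin
  · beta_reduce
    rw [sE_schrodMag_zero hadj hdistinct, schrodOp_eq_twistedOp]
    exact le_sE_schrodMag_of_signChanges_le hadj hdistinct hf' hf0 hm hφ.le α

/-- Stability corollary: `α ↦ λ_n(H(Γ^α_mag))` has a local minimum at `α = 0`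
if and only if the eigenfunction has exactly `n - 1` sign changes. -/
theorem mag_local_min_iff_no_surplus {N β : ℕ} (G : SimpleGraph (Fin N))
    [DecidableRel G.Adj] (hconn : G.Connected) (q : Fin N → ℝ)
    (uE vE : Fin β → Fin N) (horder : ∀ j, uE j < vE j)
    (hadj : ∀ j, G.Adj (uE j) (vE j))
    (hdistinct : ∀ i j, s(uE i, vE i) = s(uE j, vE j) → i = j)
    (htree : (G.deleteEdges {e | ∃ j, e = s(uE j, vE j)}).IsTree)
    (hβ : β + N = G.edgeFinset.card + 1)
    (n : ℕ) (hn1 : 1 ≤ n) (hn2 : n ≤ N)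
    (f : Fin N → ℝ)
    (heig : (schrodOp G q).mulVec f = sE (schrodOp G q) (n - 1) • f)
    (hsimple : Module.finrank ℝ
      (Module.End.eigenspace (Matrix.toLin' (schrodOp G q)) (sE (schrodOp G q) (n - 1))) = 1)
    (hf0 : ∀ v, f v ≠ 0)
    (φ : ℕ) (hφ : φ = signChanges G f) :
    IsLocalMin (fun α : Fin β → ℝ => sE (schrodMag G q uE vE α) (n - 1)) 0 ↔ φ = n - 1 := by
  subst hφ
  exact mag_local_min_iff_no_surplus_general G q uE vE hadj hdistinct htree.isAcyclic (by omega) f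
    heig hf0
    fun k hk => sE_lt_of_finrank_eigenspace_eq_one
      (schrodOp_eq_twistedOp G q ▸ isHermitian_twistedOp isConnection_one) (by omega) hk hsimple
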